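/- Let Q be a finite acyclic quiver with a unique source 0 and a unique sink r (i.e., every vertex other than 0 is the head of some arrow, 0 is the head of no arrow, every vertex other than r is the tail of some arrow, and r is the tail of no arrow). For a directed path p in Q let f(p) ∈ ℤ^{Q₁} be the function assigning to each arrow a the number of times a occurs in p. Then the kernel of the incidence map inc : ℤ^{Q₁} → ℤ^{Q₀} is generated, as an abelian group, by the elements f(p) − f(p′) where p and p′ range over all directed paths from 0 to r. -/

import Mathlib

/-!
A path `p` from `u` to `v` satisfies `inc (f p) = χ_v - χ_u` (`inc_count`), so differences of paths
from `0` to `r` lie in the kernel of `inc`.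

Conversely, since `Q` is finite and acyclic with unique source and sink, every vertex `v` is reached
from `0` by some path `P v`, and reaches `r` by some path `T v` (`exists_path_from_source`,
`exists_path_to_sink`). For an arrow `a` both `P (tl a) ++ a :: T (hd a)` and
`P (hd a) ++ T (hd a)` are paths from `0` to `r`, and the difference of their count vectors is
`d a = f (P (tl a)) + χ_a - f (P (hd a))`. If `inc g = 0`, then in `∑ a, g a • d a` the vector
`f (P v)` occurs with coefficient `-(inc g) v = 0`, so the sum equals `∑ a, g a • χ_a = g`.
-/

/-- `IsPath tl hd p u v` means that the list of arrows `p = [a₁, …, a_ℓ]` is a directed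
path from `u` to `v`: `tail a₁ = u`, `head a_k = tail a_{k+1}` and `head a_ℓ = v`
(with the empty list being the trivial path at `u = v`). -/
def IsPath {V A : Type*} (tl hd : A → V) : List A → V → V → Prop
  | [], u, v => u = v
  | a :: p, u, v => tl a = u ∧ IsPath tl hd p (hd a) v

theorem IsPath.append {V A : Type*} {tl hd : A → V} {p q : List A} {u v w : V}
    (hp : IsPath tl hd p u v) (hq : IsPath tl hd q v w) : IsPath tl hd (p ++ q) u w := by
  induction p generalizing u with
  | nil => cases hp; exact hq
  | cons a p ih => exact ⟨hp.1, ih hp.2⟩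

theorem exists_path_from_source {V A : Type*} [Finite V] {tl hd : A → V} {s : V}
    (hacyclic : ∀ v, ¬ Relation.TransGen (fun x y => ∃ a : A, tl a = x ∧ hd a = y) v v)
    (hsource : ∀ i, i ≠ s → ∃ a : A, hd a = i) (v : V) : ∃ p, IsPath tl hd p s v := by
  let R := Relation.TransGen (fun x y => ∃ a : A, tl a = x ∧ hd a = y)
  have : Std.Irrefl R := ⟨hacyclic⟩
  have : IsTrans V R := ⟨fun _ _ _ => Relation.TransGen.trans⟩
  have wf : WellFounded R := Finite.wellFounded_of_trans_of_irrefl R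
  induction v using wf.induction with
  | _ v ih =>
    by_cases h : v = s
    · exact ⟨[], h.symm⟩
    · obtain ⟨a, ha⟩ := hsource v h
      obtain ⟨p, hp⟩ := ih (tl a) (.single ⟨a, rfl, ha⟩)
      exact ⟨p ++ [a], hp.append ⟨rfl, ha⟩⟩

theorem exists_path_to_sink {V A : Type*} [Finite V] {tl hd : A → V} {t : V}
    (hacyclic : ∀ v, ¬ Relation.TransGen (fun x y => ∃ a : A, tl a = x ∧ hd a = y) v v)
    (hsink : ∀ i, i ≠ t → ∃ a : A, tl a = i) (v : V) : ∃ p, IsPath tl hd p v t := by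
  let R := Function.swap (Relation.TransGen (fun x y => ∃ a : A, tl a = x ∧ hd a = y))
  have : Std.Irrefl R := ⟨hacyclic⟩
  have : IsTrans V R := ⟨fun _ _ _ h h' => Relation.TransGen.trans h' h⟩
  have wf : WellFounded R := Finite.wellFounded_of_trans_of_irrefl R
  induction v using wf.induction with
  | _ v ih =>
    by_cases h : v = t
    · exact ⟨[], h⟩
    · obtain ⟨a, ha⟩ := hsink v h
      obtain ⟨p, hp⟩ := ih (hd a) (.single ⟨a, ha, rfl⟩)
      exact ⟨a :: p, ha, hp⟩

/-- The incidence map of the quiver, as a homomorphism of abelian groups. -/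
def inc {V A : Type*} [Fintype A] [DecidableEq V] (tl hd : A → V) : (A → ℤ) →+ (V → ℤ) where
  toFun g i := (∑ a : A, if hd a = i then g a else 0) - (∑ a : A, if tl a = i then g a else 0)
  map_zero' := by ext; simp
  map_add' g h := by
    ext i
    simp only [Pi.add_apply, ← Finset.sum_sub_distrib, ← Finset.sum_add_distrib]
    refine Finset.sum_congr rfl fun a _ => ?_
    split_ifs <;> ring

theorem count_cons_eq {A : Type*} [DecidableEq A] (a : A) (p : List A) :
    (fun b => ((a :: p).count b : ℤ)) = Pi.single a 1 + fun b => (p.count b : ℤ) := by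
  ext b
  simp only [List.count_cons, Pi.add_apply, Pi.single_apply, beq_iff_eq, eq_comm (a := b)]
  split_ifs <;> push_cast <;> ring

theorem inc_single {V A : Type*} [Fintype A] [DecidableEq A] [DecidableEq V] (tl hd : A → V)
    (a : A) : inc tl hd (Pi.single a 1) = Pi.single (hd a) 1 - Pi.single (tl a) 1 := by
  ext i
  have key (e : A → V) :
      (∑ b : A, if e b = i then (Pi.single a 1 : A → ℤ) b else 0) = (Pi.single (e a) 1 : V → ℤ) i := by
    rw [Finset.sum_eq_single a (by intro b _ hb; simp [hb]) (by simp)]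
    simp [Pi.single_apply, eq_comm]
  exact congrArg₂ (· - ·) (key hd) (key tl)

/-- Telescoping along a path: the boundary of its count vector is end point minus start point. -/
theorem inc_count {V A : Type*} [Fintype A] [DecidableEq A] [DecidableEq V] {tl hd : A → V}
    {p : List A} {u v : V} (hp : IsPath tl hd p u v) :
    inc tl hd (fun a => (p.count a : ℤ)) = Pi.single v 1 - Pi.single u 1 := by
  induction p generalizing u with
  | nil => cases hp; rw [sub_self]; exact map_zero (inc tl hd)
  | cons a p ih =>
    obtain ⟨rfl, hp⟩ := hp
    rw [count_cons_eq, map_add, inc_single, ih hp]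
    abel

/-- Grouping the arrows by head and by tail: a vertex potential `F` pairs to zero with the
kernel of the incidence map. -/
theorem sum_smul_head_eq_sum_smul_tail {V A M : Type*} [Fintype V] [Fintype A] [DecidableEq V]
    [AddCommGroup M] {tl hd : A → V} {g : A → ℤ} (hg : inc tl hd g = 0) (F : V → M) :
    ∑ a, g a • F (hd a) = ∑ a, g a • F (tl a) := by
  have key (e : A → V) : ∑ a, g a • F (e a) = ∑ v, (∑ a, if e a = v then g a else 0) • F v := by
    simp_rw [Finset.sum_smul]
    rw [Finset.sum_comm]
    simp [ite_smul]
  rw [key, key]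
  refine Finset.sum_congr rfl fun v _ => ?_
  rw [sub_eq_zero.mp (congrFun hg v)]

/-- Let `Q` be a finite acyclic quiver with vertex set `{0, …, r}`, unique source `0` and
unique sink `r`.  For a directed path `p`, let `f(p) ∈ ℤ^{Q₁}` count the occurrences of
each arrow in `p`.  Then the kernel of the incidence map `inc : ℤ^{Q₁} → ℤ^{Q₀}`,
`inc(g)(i) = Σ_{head a = i} g_a − Σ_{tail a = i} g_a`, is generated as an abelian group
by the differences `f(p) − f(p′)` where `p, p′` range over directed paths from `0` to `r`. -/
theorem ker_incidence_generated_by_path_differences (r : ℕ)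
    (A : Type*) [Fintype A] [DecidableEq A]
    (tl hd : A → Fin (r + 1))
    (hacyclic : ∀ v : Fin (r + 1),
      ¬ Relation.TransGen (fun x y => ∃ a : A, tl a = x ∧ hd a = y) v v)
    (hsource : ∀ i : Fin (r + 1), i ≠ 0 → ∃ a : A, hd a = i)
    (hnohead0 : ∀ a : A, hd a ≠ 0)
    (hsink : ∀ i : Fin (r + 1), i ≠ Fin.last r → ∃ a : A, tl a = i)
    (hnotaillast : ∀ a : A, tl a ≠ Fin.last r) :
    (AddSubgroup.closure { g : A → ℤ | ∃ p p' : List A,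
          IsPath tl hd p 0 (Fin.last r) ∧ IsPath tl hd p' 0 (Fin.last r) ∧
          g = (fun a => (p.count a : ℤ)) - (fun a => (p'.count a : ℤ)) } : Set (A → ℤ))
      = { g : A → ℤ | ∀ i : Fin (r + 1),
          (∑ a : A, if hd a = i then g a else 0)
            - (∑ a : A, if tl a = i then g a else 0) = 0 } := by
  apply Set.Subset.antisymm
  · intro g hg
    have hle : AddSubgroup.closure { g : A → ℤ | ∃ p p' : List A,
        IsPath tl hd p 0 (Fin.last r) ∧ IsPath tl hd p' 0 (Fin.last r) ∧
        g = (fun a => (p.count a : ℤ)) - (fun a => (p'.count a : ℤ)) } ≤ (inc tl hd).ker := by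
      rw [AddSubgroup.closure_le]
      rintro _ ⟨p, p', hp, hp', rfl⟩
      rw [SetLike.mem_coe, AddMonoidHom.mem_ker, map_sub, inc_count hp, inc_count hp', sub_self]
    exact fun i => congrFun (AddMonoidHom.mem_ker.mp (hle hg)) i
  · intro g hg
    have hg' : inc tl hd g = 0 := funext hg
    choose P hP using exists_path_from_source hacyclic hsource
    choose T hT using exists_path_to_sink hacyclic hsink
    let F : Fin (r + 1) → A → ℤ := fun v b => ((P v).count b : ℤ)
    have hsum : g = ∑ a, g a • (F (tl a) + Pi.single a 1 - F (hd a)) := by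
      simp_rw [smul_sub, smul_add, Finset.sum_sub_distrib, Finset.sum_add_distrib,
        sum_smul_head_eq_sum_smul_tail hg' F]
      rw [add_sub_cancel_left]
      ext b
      simp [Finset.sum_apply, Pi.single_apply]
    rw [hsum]
    refine AddSubgroup.sum_mem _ fun a _ => AddSubgroup.zsmul_mem _ (AddSubgroup.subset_closure ?_) _
    refine ⟨P (tl a) ++ a :: T (hd a), P (hd a) ++ T (hd a),
      (hP _).append ⟨rfl, hT _⟩, (hP _).append (hT _), ?_⟩
    ext b
    have hc := congrFun (count_cons_eq a (T (hd a))) b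
    simp only [Pi.add_apply] at hc
    simp only [F, Pi.add_apply, Pi.sub_apply, List.count_append, Nat.cast_add, hc]
    ring
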